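/- arXiv:1710.05731 — 2 statements merged into one kernel-verified Lean document; each statement's English description precedes it below -/
import Mathlib

section
/- For any tree T_m on m vertices and any n ≥ 1, R(T_m, K_n) = (m − 1)(n − 1) + 1. -/
/-- The graph Ramsey number `R(G₁, G₂)`: least `p` such that every red/blue coloring of the
edges of `K_p` contains a red copy of `G₁` or a blue copy of `G₂`. -/
noncomputable def graphRamsey {V1 V2 : Type*} (G1 : SimpleGraph V1) (G2 : SimpleGraph V2) : ℕ :=
  sInf {p | ∀ c : Sym2 (Fin p) → Bool,
    (∃ f : V1 → Fin p, Function.Injective f ∧ ∀ a b, G1.Adj a b → c s(f a, f b) = true) ∨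
    (∃ f : V2 → Fin p, Function.Injective f ∧ ∀ a b, G2.Adj a b → c s(f a, f b) = false)}

/-!
Write `k = m - 1`. A nonempty graph with all degrees at least `k` contains every tree on `k + 1`
vertices, since the tree can be embedded one leaf at a time. A graph without such a tree therefore
has a vertex of degree less than `k`, as do all its induced subgraphs, so greedy coloring shows that
it is `k`-colorable. With more than `k * (n - 1)` vertices, some color class then has at least `n`
elements and spans a blue `K_n`. Conversely, `n - 1` disjoint red copies of `K_k` contain no red
connected graph on `k + 1` vertices, and the blue graph between them is `(n - 1)`-colorable.
-/

open SimpleGraph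

section Containment

variable {V W α : Type*} {H : SimpleGraph V} {G : SimpleGraph W}

theorem isContained_iff_exists_injective :
    H ⊑ G ↔ ∃ f : V → W, Function.Injective f ∧ ∀ a b, H.Adj a b → G.Adj (f a) (f b) :=
  ⟨fun ⟨f⟩ => ⟨f, f.injective, fun _ _ => f.toHom.map_adj⟩,
    fun ⟨f, hf, hadj⟩ => ⟨⟨⟨f, hadj _ _⟩, hf⟩⟩⟩

theorem isContained_of_copy_induce_compl_singleton {v : V} (f : Copy (H.induce {v}ᶜ) G) {y : W}
    (hy : y ∉ Set.range f) (hadj : ∀ a, H.Adj v a.1 → G.Adj y (f a)) : H ⊑ G := by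
  classical
  refine isContained_iff_exists_injective.2 ⟨fun a => if h : a = v then y else f ⟨a, h⟩, ?_, ?_⟩
  · refine Function.Injective.dite (· = v) (f := fun _ => y) (f' := f)
      (fun a b _ => Subtype.ext (a.2.trans b.2.symm)) f.injective ?_
    exact fun h => hy ⟨_, h.symm⟩
  · intro a b hab
    by_cases ha : a = v <;> by_cases hb : b = v
    · exact absurd (ha.trans hb.symm) hab.ne
    · simpa [ha, hb] using hadj ⟨b, hb⟩ (ha ▸ hab)
    · simpa [ha, hb] using (hadj ⟨a, ha⟩ (hb ▸ hab.symm)).symm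
    · simpa [ha, hb] using f.toHom.map_adj (show (H.induce {v}ᶜ).Adj ⟨a, ha⟩ ⟨b, hb⟩ from hab)

theorem exists_adj_notMem_range_of_card_le_degree [Fintype α] (f : α → W) (a : α)
    [Fintype (G.neighborSet (f a))] (hcard : Fintype.card α ≤ G.degree (f a)) :
    ∃ y, G.Adj (f a) y ∧ y ∉ Set.range f := by
  classical
  -- `f a` is not its own neighbor, so `f` hits fewer than `card α` neighbors of `f a`.
  have hlt : ((Finset.univ.image f).erase (f a)).card < (G.neighborFinset (f a)).card :=
    (Finset.card_erase_lt_of_mem (by simp)).trans_le (Finset.card_image_le.trans hcard)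
  obtain ⟨y, hy, hyf⟩ := Finset.exists_mem_notMem_of_card_lt_card hlt
  rw [mem_neighborFinset] at hy
  refine ⟨y, hy, fun hmem => hyf ?_⟩
  simpa [hy.ne'] using hmem

theorem isContained_of_isTree_of_card_le_degree_add_one [Fintype V] [Nonempty W] [G.LocallyFinite]
    (hH : H.IsTree) (hdeg : ∀ x, Fintype.card V ≤ G.degree x + 1) : H ⊑ G := by
  classical
  induction hV : Fintype.card V generalizing V with
  | zero =>
    have := Fintype.card_eq_zero_iff.1 hV
    exact .of_isEmpty
  | succ k ih =>
    obtain hsub | hnontriv := subsingleton_or_nontrivial V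
    · inhabit W
      exact isContained_iff_exists_injective.2 ⟨fun _ => default,
        Function.injective_of_subsingleton _, fun a b hab => absurd (Subsingleton.elim a b) hab.ne⟩
    obtain ⟨leaf, hleaf⟩ := hH.exists_vert_degree_one_of_nontrivial
    have hcard : Fintype.card ({leaf}ᶜ : Set V) = k := by
      rw [Fintype.card_compl_set]
      simp [hV]
    have hsubtree : (H.induce {leaf}ᶜ).IsTree :=
      ⟨hH.connected.induce_compl_singleton_of_degree_eq_one hleaf, hH.isAcyclic.induce _⟩
    obtain ⟨f⟩ := ih hsubtree (fun x => by have := hdeg x; omega) hcard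
    obtain ⟨parent, hparent, hunique⟩ := degree_eq_one_iff_existsUnique_adj.1 hleaf
    obtain ⟨y, hy, hyf⟩ := exists_adj_notMem_range_of_card_le_degree (G := G) f
      ⟨parent, hparent.ne'⟩ (by have := hdeg (f ⟨parent, hparent.ne'⟩); omega)
    refine isContained_of_copy_induce_compl_singleton f hyf fun a ha => ?_
    obtain rfl : a = ⟨parent, hparent.ne'⟩ := Subtype.ext (hunique a ha)
    exact hy.symm

end Containment

section Coloring

variable {V W : Type*} {G : SimpleGraph W} {n : ℕ}

theorem colorable_of_induce_compl_singleton {v : W} [Fintype (G.neighborSet v)]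
    (hdeg : G.degree v < n) (hcol : (G.induce {v}ᶜ).Colorable n) : G.Colorable n := by
  classical
  obtain ⟨C⟩ := hcol
  have hnsurj : ¬ Function.Surjective fun u : G.neighborSet v => C ⟨u, u.2.ne'⟩ := fun hsurj => by
    have := Fintype.card_le_of_surjective _ hsurj
    rw [Fintype.card_fin, card_neighborSet_eq_degree] at this
    omega
  obtain ⟨c, hc⟩ : ∃ c, ∀ u (hu : G.Adj v u), C ⟨u, hu.ne'⟩ ≠ c := by
    simpa [Function.Surjective] using hnsurj
  refine ⟨.mk (fun w => if h : w = v then c else C ⟨w, h⟩) fun {a b} hab => ?_⟩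
  by_cases ha : a = v <;> by_cases hb : b = v
  · exact absurd (ha.trans hb.symm) hab.ne
  · simpa [ha, hb] using (hc b (ha ▸ hab)).symm
  · simpa [ha, hb] using hc a (hb ▸ hab.symm)
  · simpa [ha, hb] using C.valid (show (G.induce {v}ᶜ).Adj ⟨a, ha⟩ ⟨b, hb⟩ from hab)

theorem colorable_of_isTree_of_free [Fintype V] [Finite W] {T : SimpleGraph V} (hT : T.IsTree)
    (hfree : T.Free G) : G.Colorable (Fintype.card V - 1) := by
  classical
  induction hW : Nat.card W generalizing W with
  | zero =>
    have := Finite.card_eq_zero_iff.1 hW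
    exact .of_isEmpty _
  | succ k ih =>
    have : Nonempty W := Finite.card_pos_iff.1 (by omega)
    have := Fintype.ofFinite W
    obtain ⟨v, hv⟩ : ∃ v, G.degree v + 1 < Fintype.card V := by
      by_contra! hdeg
      exact hfree (isContained_of_isTree_of_card_le_degree_add_one hT hdeg)
    refine colorable_of_induce_compl_singleton (v := v) (by omega) (ih ?_ ?_)
    · exact fun hcont => hfree (hcont.trans ⟨Copy.induce G _⟩)
    · rw [Nat.card_coe_set_eq, Set.ncard_compl, Set.ncard_singleton, hW, Nat.add_sub_cancel]

theorem not_indepSetFree_of_colorable [Fintype W] {k : ℕ} (hcol : G.Colorable k)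
    (hcard : k * n < Fintype.card W) : ¬ G.IndepSetFree (n + 1) := by
  classical
  obtain ⟨C⟩ := hcol
  obtain ⟨c, hc⟩ := Fintype.exists_lt_card_fiber_of_mul_lt_card C (by simpa using hcard)
  obtain ⟨s, hs, hscard⟩ := Finset.exists_subset_card_eq (Nat.succ_le_of_lt hc)
  have hsub : (s : Set W) ⊆ C.colorClass c := fun x hx => (Finset.mem_filter.1 (hs hx)).2
  exact fun hfree => hfree s ⟨(C.isIndepSet_colorClass c).mono hsub, hscard⟩

end Coloring

section Ramsey

variable {V W α : Type*}

theorem isContained_or_top_isContained_compl_of_isTree [Fintype V] [Fintype W]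
    {T : SimpleGraph V} (hT : T.IsTree) (G : SimpleGraph W) {n : ℕ}
    (hcard : (Fintype.card V - 1) * n < Fintype.card W) :
    T ⊑ G ∨ (⊤ : SimpleGraph (Fin (n + 1))) ⊑ Gᶜ := by
  refine or_iff_not_imp_left.2 fun hfree => (not_cliqueFree_iff_top_isContained _).1 ?_
  rw [cliqueFree_compl]
  exact not_indepSetFree_of_colorable (colorable_of_isTree_of_free hT hfree) hcard

theorem eq_of_connected_of_forall_adj_eq {H : SimpleGraph V} (hH : H.Connected) {g : V → α}
    (hg : ∀ a b, H.Adj a b → g a = g b) (a b : V) : g a = g b := by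
  obtain ⟨w⟩ := hH.preconnected a b
  induction w with
  | nil => rfl
  | cons hab _ ih => exact (hg _ _ hab).trans ih

theorem exists_free_and_compl_colorable [Fintype V] [Fintype W] {H : SimpleGraph V}
    (hH : H.Connected) {n : ℕ} (hcard : Fintype.card W ≤ (Fintype.card V - 1) * n) :
    ∃ G : SimpleGraph W, H.Free G ∧ Gᶜ.Colorable n := by
  have := hH.nonempty
  obtain ⟨e⟩ : Nonempty (W ↪ Fin n × Fin (Fintype.card V - 1)) :=
    Function.Embedding.nonempty_of_card_le (by simpa [mul_comm] using hcard)
  -- The blocks, on which `Prod.fst ∘ e` is constant, are the cliques of `G`.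
  refine ⟨((⊤ : SimpleGraph (Fin n)).comap (Prod.fst ∘ e))ᶜ, fun ⟨f⟩ => ?_, ?_⟩
  · have hblock : ∀ a b, (e (f a)).1 = (e (f b)).1 :=
      eq_of_connected_of_forall_adj_eq hH fun a b hab => by
        simpa using (f.toHom.map_adj hab).2
    have hinj : Function.Injective fun a => (e (f a)).2 := fun a b hab =>
      f.injective (e.injective (Prod.ext (hblock a b) hab))
    have hle := Fintype.card_le_of_injective _ hinj
    rw [Fintype.card_fin] at hle
    have := Fintype.card_pos (α := V)
    omega
  · rw [compl_compl]
    exact ⟨Hom.comap _ _⟩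

theorem graphRamsey_eq_sInf (G₁ : SimpleGraph V) (G₂ : SimpleGraph W) :
    graphRamsey G₁ G₂ = sInf {p | ∀ R : SimpleGraph (Fin p), G₁ ⊑ R ∨ G₂ ⊑ Rᶜ} := by
  classical
  refine congrArg sInf (Set.ext fun p => ⟨fun h R => ?_, fun h c => ?_⟩)
  · simp only [isContained_iff_exists_injective]
    refine (h fun e => decide (e ∈ R.edgeSet)).imp ?_ ?_
    · exact fun ⟨f, hf, hred⟩ => ⟨f, hf, fun a b hab => by simpa using hred a b hab⟩
    · exact fun ⟨f, hf, hblue⟩ =>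
        ⟨f, hf, fun a b hab => ⟨hf.ne hab.ne, by simpa using hblue a b hab⟩⟩
  · have hR := h (fromEdgeSet {e | c e = true})
    simp only [isContained_iff_exists_injective] at hR
    refine hR.imp ?_ ?_
    · exact fun ⟨f, hf, hred⟩ => ⟨f, hf, fun a b hab => (hred a b hab).1⟩
    · exact fun ⟨f, hf, hblue⟩ =>
        ⟨f, hf, fun a b hab => by simpa [hf.ne hab.ne] using (hblue a b hab).2⟩

end Ramsey

theorem stmt_1 (m n : ℕ) (hn : 1 ≤ n) {V : Type*} [Fintype V]
    (T : SimpleGraph V) (hT : T.IsTree) (hm : Fintype.card V = m) :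
    graphRamsey T (⊤ : SimpleGraph (Fin n)) = (m - 1) * (n - 1) + 1 := by
  subst hm
  obtain ⟨n, rfl⟩ := Nat.exists_eq_add_of_le' hn
  rw [graphRamsey_eq_sInf, Nat.add_sub_cancel]
  refine IsLeast.csInf_eq ⟨fun R => ?_, fun p hp => ?_⟩
  · exact isContained_or_top_isContained_compl_of_isTree hT R (by simp)
  · by_contra! hlt
    obtain ⟨R, hfree, hcol⟩ := exists_free_and_compl_colorable (W := Fin p) (n := n) hT.connected
      (by simpa using Nat.le_of_lt_succ hlt)
    have hclique : Rᶜ.CliqueFree (n + 1) := hcol.cliqueFree n.lt_succ_self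
    exact (hp R).elim hfree fun hcont => hcont.not_cliqueFree hclique
end

section
/- Let n ≥ r ≥ 2 and suppose r − 1 divides n − 1. Then every r-uniform tree T_m^{(r)} on m vertices satisfies R(T_m^{(r)}, K_n^{(r)}; r) = (m−1)(n−1)/(r−1) + 1; in particular such trees are n-good. -/
/-- `IsTreeList r l` : the list of hyperedges `l` builds an `r`-uniform tree
hyperedge-by-hyperedge, each new hyperedge meeting the union of the previous
hyperedges in exactly one vertex. -/
inductive IsTreeList (r : ℕ) {V : Type*} [DecidableEq V] : List (Finset V) → Prop
  | single (e : Finset V) (he : e.card = r) : IsTreeList r [e]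
  | cons (e : Finset V) (l : List (Finset V)) (hl : IsTreeList r l) (he : e.card = r)
      (hint : (e ∩ l.foldr (· ∪ ·) ∅).card = 1) : IsTreeList r (e :: l)

/-- `hRamsey E r n` is the Ramsey number `R(H, K_n^{(r)}; r)` where `H` is the
hypergraph with vertex type `V` and hyperedge set `E`. -/
noncomputable def hRamsey {V : Type*} [DecidableEq V] (E : Set (Finset V)) (r n : ℕ) : ℕ :=
  sInf {p | ∀ c : Finset (Fin p) → Bool,
    (∃ f : V → Fin p, Function.Injective f ∧ ∀ e ∈ E, c (e.image f) = true) ∨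
    (∃ g : Fin n → Fin p, Function.Injective g ∧
      ∀ e : Finset (Fin n), e.card = r → c (e.image g) = false)}

/-! **Upper bound.** Let the tree have `t` hyperedges and suppose that every `q + 1` points span a
red edge; by induction on `t`, every set `S` of `t * q + 1` points contains a red copy of the tree.
To attach one more hyperedge at the vertex `x`, pick points `v₀, …, v_q` of `S` one at a time, `vᵢ`
being the image of `x` in a red copy avoiding `v₀, …, vᵢ₋₁`. Some of the `vᵢ` span a red edge `E`,
and the copy that goes with the last point of `E` meets `E` in that point only, so that `E` extends
it.

**Lower bound.** Split the points into `k` blocks of at most `m - 1` points and colour an edge red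
when it lies in one block. A red copy of a connected hypergraph lies in one block, hence has fewer
than `m` vertices, while among `k * (r - 1) + 1` points some `r` share a block. -/

section

open Finset

variable {V : Type*}

/-- `Arrows E r n p`: every two-colouring of the finite sets of `p` points has a red (`true`) copy
of the hypergraph with hyperedge set `E` or a blue (`false`) copy of `K_n^{(r)}`. The least such
`p` is `hRamsey E r n`. -/
def Arrows (E : Set (Finset V)) (r n p : ℕ) : Prop :=
  ∀ c : Finset (Fin p) → Bool,
    (∃ f : V → Fin p, Function.Injective f ∧ ∀ e ∈ E, c (e.image f) = true) ∨
    (∃ g : Fin n → Fin p, Function.Injective g ∧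
      ∀ e : Finset (Fin n), e.card = r → c (e.image g) = false)

/-- The primal graph (2-section) of a hypergraph: distinct vertices are adjacent when they share a
hyperedge. A hypergraph is connected when its primal graph is. -/
def primalGraph (E : Set (Finset V)) : SimpleGraph V where
  Adj x y := x ≠ y ∧ ∃ e ∈ E, x ∈ e ∧ y ∈ e
  symm := ⟨fun _ _ ⟨hne, e, he, hx, hy⟩ => ⟨hne.symm, e, he, hy, hx⟩⟩
  loopless := ⟨fun _ h => h.1 rfl⟩

theorem eq_of_reachable_primalGraph {β : Type*} {E : Set (Finset V)} {φ : V → β}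
    (hφ : ∀ e ∈ E, ∀ x ∈ e, ∀ y ∈ e, φ x = φ y) {x y : V} (h : (primalGraph E).Reachable x y) :
    φ x = φ y := by
  obtain ⟨w⟩ := h
  induction w with
  | nil => rfl
  | cons hadj _ ih =>
    obtain ⟨-, e, he, hx, hy⟩ := hadj
    exact (hφ e he _ hx _ hy).trans ih

theorem not_arrows_of_connected [Fintype V] {E : Set (Finset V)} (hE : (primalGraph E).Connected)
    {r n k p : ℕ} (hn : k * (r - 1) < n) (hp : p ≤ k * (Fintype.card V - 1)) :
    ¬ Arrows E r n p := by
  intro h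
  obtain ⟨ι⟩ : Nonempty (Fin p ↪ Fin k × Fin (Fintype.card V - 1)) :=
    Function.Embedding.nonempty_of_card_le (by simpa using hp)
  rcases h fun e => decide (∀ a ∈ e, ∀ b ∈ e, (ι a).1 = (ι b).1) with
    ⟨f, hf, hred⟩ | ⟨g, -, hblue⟩
  · have hblock : ∀ x y, (ι (f x)).1 = (ι (f y)).1 := fun x y =>
      eq_of_reachable_primalGraph (φ := fun x => (ι (f x)).1)
        (fun e he x hx y hy => of_decide_eq_true (hred e he) _ (mem_image_of_mem f hx) _
          (mem_image_of_mem f hy))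
        (hE.preconnected x y)
    have hinj : Function.Injective fun x => (ι (f x)).2 := fun x y hxy =>
      hf (ι.injective (Prod.ext (hblock x y) hxy))
    have hle := Fintype.card_le_of_injective _ hinj
    have := hE.nonempty
    have := Fintype.card_pos (α := V)
    rw [Fintype.card_fin] at hle
    omega
  · obtain ⟨b, hb⟩ := Fintype.exists_lt_card_fiber_of_mul_lt_card
      (fun i => (ι (g i)).1) (n := r - 1) (by simpa using hn)
    obtain ⟨e, heb, he⟩ := exists_subset_card_eq (Nat.le_of_pred_lt hb)
    have hmem : ∀ i ∈ e, (ι (g i)).1 = b := fun i hi => (mem_filter.mp (heb hi)).2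
    refine of_decide_eq_false (hblue e he) ?_
    simp only [forall_mem_image]
    exact fun i hi j hj => (hmem i hi).trans (hmem j hj).symm

variable {α : Type*} [DecidableEq V] [DecidableEq α]

/-- The set of vertices covered by a list of hyperedges, in the form in which it occurs in
`IsTreeList`. -/
def vertexSet (l : List (Finset V)) : Finset V :=
  l.foldr (· ∪ ·) ∅

theorem vertexSet_singleton (e : Finset V) : vertexSet [e] = e :=
  union_empty e

theorem vertexSet_cons (e : Finset V) (l : List (Finset V)) :
    vertexSet (e :: l) = e ∪ vertexSet l :=
  rfl

theorem subset_vertexSet {l : List (Finset V)} {e : Finset V} (he : e ∈ l) : e ⊆ vertexSet l := by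
  induction l with
  | nil => simp at he
  | cons d l ih =>
    rcases List.mem_cons.mp he with rfl | he
    · exact subset_union_left
    · exact (ih he).trans subset_union_right

/-- `IsCopy l G S f`: the map `f` places a copy of the hypergraph with hyperedges `l` inside the
point set `S`, all of whose hyperedges belong to `G`. Injectivity is only required on
`vertexSet l`, so that a hypergraph can be built up inside a fixed vertex type. -/
structure IsCopy (l : List (Finset V)) (G : Set (Finset α)) (S : Finset α) (f : V → α) :
    Prop where
  injOn : Set.InjOn f (vertexSet l)
  mapsTo : Set.MapsTo f (vertexSet l) S
  image_mem : ∀ e ∈ l, e.image f ∈ G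

theorem IsCopy.mono {l : List (Finset V)} {G : Set (Finset α)} {S T : Finset α} {f : V → α}
    (hf : IsCopy l G S f) (hST : S ⊆ T) : IsCopy l G T f :=
  ⟨hf.injOn, hf.mapsTo.mono_right hST, hf.image_mem⟩

theorem exists_isCopy_singleton [Nonempty α] {G : Set (Finset α)} {S E : Finset α} {e : Finset V}
    (hE : E ∈ G) (hES : E ⊆ S) (hcard : #e = #E) : ∃ f : V → α, IsCopy [e] G S f := by
  obtain ⟨f, hf⟩ := e.finite_toSet.exists_bijOn_of_encard_eq (t := (E : Set α))
    (by simpa only [Set.encard_coe_eq_coe_finsetCard, Nat.cast_inj] using hcard)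
  have him : e.image f = E := coe_injective (by rw [coe_image, hf.image_eq])
  refine ⟨f, ?_, ?_, by simpa [him] using hE⟩ <;> rw [vertexSet_singleton]
  exacts [hf.injOn, hf.mapsTo.mono_right hES]

theorem exists_eqOn_injOn_union_image_eq [Nonempty α] {f : V → α} {s t : Finset V} {u : Finset α}
    (hst : Disjoint s t) (hcard : #s = #u) (hf : Set.InjOn f t) (hu : ∀ x ∈ t, f x ∉ u) :
    ∃ g : V → α, Set.EqOn g f t ∧ Set.InjOn g (s ∪ t : Finset V) ∧ s.image g = u := by
  obtain ⟨h, hh⟩ := s.finite_toSet.exists_bijOn_of_encard_eq (t := (u : Set α))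
    (by simpa only [Set.encard_coe_eq_coe_finsetCard, Nat.cast_inj] using hcard)
  have hgh : Set.EqOn (s.piecewise h f) h s := fun x hx => s.piecewise_eq_of_mem h f hx
  have hgf : Set.EqOn (s.piecewise h f) f t := fun x hx =>
    s.piecewise_eq_of_notMem h f (disjoint_right.mp hst hx)
  refine ⟨s.piecewise h f, hgf, ?_, coe_injective ?_⟩
  · rw [coe_union, Set.injOn_union (disjoint_coe.mpr hst)]
    refine ⟨hh.injOn.congr hgh.symm, hf.congr hgf.symm, fun x hx y hy hxy => hu y hy ?_⟩
    rw [← hgf hy, ← hxy, hgh hx]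
    exact hh.mapsTo hx
  · rw [coe_image, hgh.image_eq, hh.image_eq]

theorem IsCopy.exists_cons {l : List (Finset V)} {G : Set (Finset α)} {S E : Finset α}
    {e : Finset V} {x : V} {f : V → α} (hx : e ∩ vertexSet l = {x}) (hE : E ∈ G) (hES : E ⊆ S)
    (hcard : #e = #E) (hfx : f x ∈ E) (hf : IsCopy l G (S \ E.erase (f x)) f) :
    ∃ g : V → α, IsCopy (e :: l) G S g := by
  obtain ⟨hxe, hxl⟩ := mem_inter.mp (hx ▸ mem_singleton_self x)
  have hdisj : Disjoint (e.erase x) (vertexSet l) := by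
    rw [disjoint_iff_inter_eq_empty, erase_inter, hx, erase_singleton]
  have hunion : e.erase x ∪ vertexSet l = e ∪ vertexSet l := by
    rw [erase_union_of_mem hxl]
  have : Nonempty α := ⟨f x⟩
  obtain ⟨g, hgf, hginj, hgimage⟩ := exists_eqOn_injOn_union_image_eq hdisj
    (by rw [card_erase_of_mem hxe, card_erase_of_mem hfx, hcard]) hf.injOn
    fun y hy => (mem_sdiff.mp (hf.mapsTo hy)).2
  have hge : e.image g = E := by
    rw [← insert_erase hxe, image_insert, hgimage, hgf hxl, insert_erase hfx]
  refine ⟨g, ?_, ?_, ?_⟩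
  · rwa [vertexSet_cons, ← hunion]
  · rw [vertexSet_cons, coe_union]
    refine Set.MapsTo.union (fun y hy => hES (hge ▸ mem_image_of_mem g hy)) fun y hy => ?_
    rw [hgf hy]
    exact (mem_sdiff.mp (hf.mapsTo hy)).1
  · refine List.forall_mem_cons.mpr ⟨hge ▸ hE, fun d hd => ?_⟩
    rw [image_congr fun y hy => hgf (subset_vertexSet hd hy)]
    exact hf.image_mem d hd

-- The points of `B` are chosen one at a time, and the witness in `e` is the one chosen last.
theorem exists_subset_card_eq_forall_exists_sdiff_erase {P : α → Finset α → Prop} {s : ℕ}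
    (hmono : ∀ v, Monotone (P v)) (hP : ∀ S : Finset α, s ≤ #S → ∃ v ∈ S, P v S)
    {S : Finset α} {j : ℕ} (hS : s + j ≤ #S + 1) :
    ∃ B ⊆ S, #B = j ∧ ∀ e ⊆ B, e.Nonempty → ∃ v ∈ e, P v (S \ e.erase v) := by
  induction j with
  | zero =>
    exact ⟨∅, empty_subset S, rfl, fun e he hne => absurd (subset_empty.mp he) hne.ne_empty⟩
  | succ j ih =>
    obtain ⟨B, hBS, rfl, hB⟩ := ih (by omega)
    obtain ⟨v, hv, hPv⟩ := hP (S \ B) (by rw [card_sdiff_of_subset hBS]; omega)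
    obtain ⟨hvS, hvB⟩ := mem_sdiff.mp hv
    refine ⟨insert v B, insert_subset hvS hBS, card_insert_of_notMem hvB, fun e he hne => ?_⟩
    by_cases hve : v ∈ e
    · exact ⟨v, hve, hmono v (sdiff_subset_sdiff le_rfl (subset_insert_iff.mp he)) hPv⟩
    · exact hB e ((subset_insert_iff_of_notMem hve).mp he) hne

namespace IsTreeList

variable {r : ℕ} {l : List (Finset V)}

theorem card_vertexSet (hl : IsTreeList r l) (hr : 1 ≤ r) :
    #(vertexSet l) = l.length * (r - 1) + 1 := by
  induction hl with
  | single e he =>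
    rw [vertexSet_singleton, List.length_singleton]
    omega
  | cons e l _ he hint ih =>
    have hcard := card_union_add_card_inter e (vertexSet l)
    rw [show #(e ∩ vertexSet l) = 1 from hint] at hcard
    rw [vertexSet_cons, List.length_cons, Nat.succ_mul]
    omega

theorem reachable (hl : IsTreeList r l) {G : SimpleGraph V} (hG : ∀ e ∈ l, G.IsClique e) :
    ∀ x ∈ vertexSet l, ∀ y ∈ vertexSet l, G.Reachable x y := by
  have hedge : ∀ e ∈ l, ∀ x ∈ e, ∀ y ∈ e, G.Reachable x y := fun e he x hx y hy => by
    rcases eq_or_ne x y with rfl | hxy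
    · exact SimpleGraph.Reachable.rfl
    · exact (hG e he hx hy hxy).reachable
  clear hG
  induction hl with
  | single e _ => simpa only [vertexSet_singleton] using hedge e List.mem_cons_self
  | cons e l _ _ hint ih =>
    obtain ⟨v, hv⟩ := card_pos.mp (hint.symm ▸ Nat.one_pos)
    obtain ⟨hve, hvl⟩ := mem_inter.mp hv
    obtain ⟨he, hedge⟩ := List.forall_mem_cons.mp hedge
    have hcentre : ∀ x ∈ vertexSet (e :: l), G.Reachable x v := fun x hx =>
      (mem_union.mp hx).elim (fun hx => he x hx v hve) fun hx => ih hedge x hx v hvl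
    exact fun x hx y hy => (hcentre x hx).trans (hcentre y hy).symm

theorem connected_primalGraph [Fintype V] [Nonempty V] (hl : IsTreeList r l)
    (hcover : vertexSet l = univ) : (primalGraph {e | e ∈ l}).Connected := by
  refine ⟨fun x y => hl.reachable (G := primalGraph {e | e ∈ l})
    (fun e he x hx y hy hxy => ⟨hxy, e, he, hx, hy⟩) x ?_ y ?_⟩ <;>
    simp only [hcover, mem_univ]

theorem exists_isCopy (hl : IsTreeList r l) {G : Set (Finset α)} {q : ℕ}
    (hG : ∀ B : Finset α, #B = q + 1 → ∃ E ⊆ B, #E = r ∧ E ∈ G) {S : Finset α}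
    (hS : l.length * q + 1 ≤ #S) : ∃ f : V → α, IsCopy l G S f := by
  induction hl generalizing S with
  | single e he =>
    rw [List.length_singleton, one_mul] at hS
    have : Nonempty α := (card_pos.mp (by omega : 0 < #S)).to_type
    obtain ⟨B, hBS, hB⟩ := exists_subset_card_eq hS
    obtain ⟨E, hEB, hE, hEG⟩ := hG B hB
    exact exists_isCopy_singleton hEG (hEB.trans hBS) (he.trans hE.symm)
  | cons e l _ he hint ih =>
    obtain ⟨x, hx⟩ := card_eq_one.mp hint
    obtain ⟨hxe, hxl⟩ := mem_inter.mp (hx ▸ mem_singleton_self x)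
    let P (v : α) (T : Finset α) : Prop := ∃ f : V → α, f x = v ∧ IsCopy l G T f
    have hP (T : Finset α) (hT : l.length * q + 1 ≤ #T) : ∃ v ∈ T, P v T := by
      obtain ⟨f, hf⟩ := ih hT
      exact ⟨f x, hf.mapsTo hxl, f, rfl, hf⟩
    have hmono (v : α) : Monotone (P v) := fun T T' hTT' ⟨f, hfx, hf⟩ => ⟨f, hfx, hf.mono hTT'⟩
    rw [List.length_cons, Nat.succ_mul] at hS
    obtain ⟨B, hBS, hBcard, hB⟩ :=
      exists_subset_card_eq_forall_exists_sdiff_erase hmono hP (S := S) (j := q + 1) (by omega)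
    obtain ⟨E, hEB, hE, hEG⟩ := hG B hBcard
    have hcard : #e = #E := he.trans hE.symm
    obtain ⟨_, hfx, f, rfl, hf⟩ := hB E hEB (card_pos.mp (hcard ▸ card_pos.mpr ⟨x, hxe⟩))
    exact hf.exists_cons hx hEG (hEB.trans hBS) hcard hfx

theorem arrows [Fintype V] (hl : IsTreeList r l) (hcover : vertexSet l = univ) (q : ℕ) :
    Arrows {e | e ∈ l} r (q + 1) (l.length * q + 1) := by
  intro c
  refine or_iff_not_imp_right.mpr fun hblue => ?_
  push Not at hblue
  have hred (B : Finset (Fin (l.length * q + 1))) (hB : #B = q + 1) :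
      ∃ E ⊆ B, #E = r ∧ E ∈ {e | c e = true} := by
    have hinj := (B.orderEmbOfFin hB).injective
    obtain ⟨e, he, hce⟩ := hblue _ hinj
    exact ⟨_, image_subset_iff.mpr fun i _ => B.orderEmbOfFin_mem hB i,
      (card_image_of_injective e hinj).trans he, Bool.eq_true_of_not_eq_false hce⟩
  obtain ⟨f, hf⟩ := hl.exists_isCopy hred (S := univ) (card_fin _).ge
  refine ⟨f, Set.injOn_univ.mp ?_, hf.image_mem⟩
  simpa only [hcover, coe_univ] using hf.injOn

end IsTreeList

end

theorem stmt_14 (r n m : ℕ) (hr : 2 ≤ r) (hn : r ≤ n) (hdvd : (r - 1) ∣ (n - 1))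
    {V : Type*} [Fintype V] [DecidableEq V]
    -- `T_m^{(r)}`: an `r`-uniform tree on the `m` vertices of `V`:
    (l : List (Finset V)) (hl : IsTreeList r l) (hcover : l.foldr (· ∪ ·) ∅ = Finset.univ)
    (hm : Fintype.card V = m) :
    hRamsey {e | e ∈ l} r n = (m - 1) * ((n - 1) / (r - 1)) + 1 := by
  obtain ⟨k, hk⟩ := hdvd
  obtain rfl : n = (r - 1) * k + 1 := by omega
  have hm' : m = l.length * (r - 1) + 1 := by
    rw [← hm, ← Finset.card_univ, ← hcover]
    exact hl.card_vertexSet (by omega)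
  have : Nonempty V := Fintype.card_pos_iff.mp (by omega)
  rw [Nat.add_sub_cancel, Nat.mul_div_cancel_left k (by omega)]
  refine IsLeast.csInf_eq (s := {p | Arrows {e | e ∈ l} r ((r - 1) * k + 1) p})
    ⟨?_, fun p hp => ?_⟩
  · rw [hm', Nat.add_sub_cancel, mul_assoc]
    exact hl.arrows hcover ((r - 1) * k)
  · by_contra! hlt
    refine not_arrows_of_connected (hl.connected_primalGraph hcover) (k := k) ?_ ?_ hp
    · rw [mul_comm]
      exact Nat.lt_succ_self _
    · rw [hm, mul_comm]
      exact Nat.le_of_lt_succ hlt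
end
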